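/- Fourth-order consistency with optimal shape parameter (scalar Gaussian case): let L ∈ ℝ, u(t) = e^{Lt}u₀ with u₀ ≠ 0, and choose ε² = −L²/6 (so ε²u = −(1/6)u''). With a = (e^{ε²Δt²} − 1)/(2ε²Δt) (interpreted by continuity when ε = 0), the truncation error τ = ((1 − aL)u(t+Δt) − (1 + aL)u(t))/Δt satisfies τ = O(Δt⁴) as Δt → 0. -/

import Mathlib

/-- The numerator of the Gaussian trapezoidal scheme, in terms of `x = L Δt`: if `b` is
`3 (1 - exp (-x² / 6)) / x`, then `(1 - b) exp x - (1 + b)` is of fifth order in `x`. -/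
theorem abs_gaussian_defect_le {x b : ℝ} (hx0 : x ≠ 0) (hx : |x| ≤ 1)
    (hb : b * x = 3 * (1 - Real.exp (-x ^ 2 / 6))) :
    |(1 - b) * Real.exp x - (1 + b)| ≤ 10 * |x| ^ 5 := by
  have hpos : 0 < |x| := abs_pos.mpr hx0
  have hsq : |x| ^ 2 ≤ 1 := pow_le_one₀ hpos.le hx
  have hy : |-x ^ 2 / 6| = |x| ^ 2 / 6 := by
    rw [abs_div, abs_neg, abs_pow]; norm_num
  have hexp := Real.exp_bound hx (n := 5) (by norm_num)
  have hgauss := Real.exp_bound (x := -x ^ 2 / 6) (by rw [hy]; linarith) (n := 3) (by norm_num)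
  rw [hy] at hgauss
  simp only [Finset.sum_range_succ, Finset.sum_range_zero, Nat.factorial] at hexp hgauss
  norm_num at hexp hgauss
  set R := Real.exp x - (1 + x + x ^ 2 / 2 + x ^ 3 / 6 + x ^ 4 / 24) with hR
  set S := b - (x / 2 - x ^ 3 / 24) with hS
  have hR_le : |R| ≤ |x| ^ 5 := by
    have : (0 : ℝ) ≤ |x| ^ 5 := by positivity
    linarith
  have hS_le : |S| ≤ |x| ^ 5 := by
    have hSx : S * x =
        -3 * (Real.exp (-x ^ 2 / 6) - (1 + -x ^ 2 / 6 + (-x ^ 2 / 6) ^ 2 / 2)) := by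
      rw [hS, sub_mul, hb]; ring
    have hmul : |S| * |x| ≤ |x| ^ 5 * |x| := by
      rw [← abs_mul, hSx, abs_mul]
      have hpow : |x| ^ 5 * |x| = x ^ 6 := by
        rw [← pow_succ]; exact Even.pow_abs (by decide) x
      have : (0 : ℝ) ≤ x ^ 6 := by positivity
      rw [hpow, abs_neg, abs_of_pos (by norm_num : (0 : ℝ) < 3)]
      linarith
    exact le_of_mul_le_mul_right hmul hpos
  have hE : |Real.exp x + 1| ≤ 4 := by
    rw [abs_of_pos (by positivity)]
    have := Real.exp_le_exp.mpr (abs_le.mp hx).2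
    linarith [Real.exp_one_lt_d9]
  have hx3 : |x ^ 3| ≤ 1 := by rw [abs_pow]; exact pow_le_one₀ hpos.le hx
  have hP : |1 - (x / 2 - x ^ 3 / 24)| ≤ 2 := by
    rw [abs_le] at hx hx3 ⊢
    constructor <;> linarith [hx.1, hx.2, hx3.1, hx3.2]
  have hQ : |x / 144 + x ^ 2 / 576| ≤ 1 := by
    rw [sq_abs] at hsq
    rw [abs_le] at hx ⊢
    constructor <;> linarith [hx.1, hx.2, sq_nonneg x]
  have hsplit : (1 - b) * Real.exp x - (1 + b) =
      x ^ 5 * (x / 144 + x ^ 2 / 576) + (1 - (x / 2 - x ^ 3 / 24)) * R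
        - S * (Real.exp x + 1) := by
    rw [hR, hS]; ring
  have h5 : (0 : ℝ) ≤ |x| ^ 5 := by positivity
  have h₁ : |x ^ 5 * (x / 144 + x ^ 2 / 576)| ≤ |x| ^ 5 * 1 := by
    rw [abs_mul, abs_pow]; gcongr
  have h₂ : |(1 - (x / 2 - x ^ 3 / 24)) * R| ≤ 2 * |x| ^ 5 := by
    rw [abs_mul]; gcongr
  have h₃ : |S * (Real.exp x + 1)| ≤ |x| ^ 5 * 4 := by
    rw [abs_mul]; gcongr
  rw [hsplit]
  refine (abs_sub _ _).trans ?_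
  linarith [abs_add_le (x ^ 5 * (x / 144 + x ^ 2 / 576)) ((1 - (x / 2 - x ^ 3 / 24)) * R)]

theorem gaussian_fourth_order_consistency (L u₀ t : ℝ) (hu₀ : u₀ ≠ 0) (ht : 0 ≤ t) :
    ∃ C δ : ℝ, 0 < C ∧ 0 < δ ∧ ∀ Δt : ℝ, 0 < Δt → Δt < δ →
      ∀ a : ℝ,
        (if L = 0 then a = Δt / 2
          else a = (Real.exp (-L ^ 2 / 6 * Δt ^ 2) - 1) / (2 * (-L ^ 2 / 6) * Δt)) →
        |((1 - a * L) * (Real.exp (L * (t + Δt)) * u₀) -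
              (1 + a * L) * (Real.exp (L * t) * u₀)) / Δt| ≤ C * Δt ^ 4 := by
  rcases eq_or_ne L 0 with rfl | hL
  · refine ⟨1, 1, one_pos, one_pos, fun Δt hΔ _ a _ => ?_⟩
    simp only [mul_zero, zero_mul, sub_zero, add_zero, sub_self, zero_div, abs_zero]
    positivity
  have hL' : 0 < |L| := abs_pos.mpr hL
  refine ⟨10 * |L| ^ 5 * (Real.exp (L * t) * |u₀|), 1 / |L|, by positivity, by positivity,
    fun Δt hΔ hδ a ha => ?_⟩
  rw [if_neg hL] at ha
  have habs : |L * Δt| = |L| * Δt := by rw [abs_mul, abs_of_pos hΔ]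
  have hx : |L * Δt| ≤ 1 := by
    rw [habs, mul_comm]
    exact ((lt_div_iff₀ hL').mp hδ).le
  have hb : a * L * (L * Δt) = 3 * (1 - Real.exp (-(L * Δt) ^ 2 / 6)) := by
    rw [ha, show -(L * Δt) ^ 2 / 6 = -L ^ 2 / 6 * Δt ^ 2 by ring]
    have := hΔ.ne'
    field_simp
    ring
  have hdefect := abs_gaussian_defect_le (mul_ne_zero hL hΔ.ne') hx hb
  have hfactor : (1 - a * L) * (Real.exp (L * (t + Δt)) * u₀) -
      (1 + a * L) * (Real.exp (L * t) * u₀) =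
      ((1 - a * L) * Real.exp (L * Δt) - (1 + a * L)) * (Real.exp (L * t) * u₀) := by
    rw [mul_add, Real.exp_add]; ring
  rw [abs_div, abs_of_pos hΔ, div_le_iff₀ hΔ, hfactor, abs_mul, abs_mul (Real.exp _),
    Real.abs_exp]
  calc _ ≤ 10 * |L * Δt| ^ 5 * (Real.exp (L * t) * |u₀|) := by gcongr
    _ = _ := by rw [habs]; ring
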